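/- Let f ≥ 1 be a natural number, n = 3f+1, and fix a subset B of the n nodes with |B| = f (the Byzantine nodes). Let ε > 0 and φ ≥ 1 be real numbers, and let n_c be a natural number with 1 ≤ n_c ≤ n and n_c ≥ 18·log(2φ/ε). Let S_1, …, S_φ be φ mutually independent subsets, each chosen uniformly at random from all n_c-element subsets of the n nodes. Then with probability at least 1 − ε/2, every one of the φ sampled committees contains at most n_c/2 Byzantine nodes, i.e. P(∀ i ∈ {1,…,φ}, |S_i ∩ B| ≤ n_c/2) ≥ 1 − ε/2. -/

import Mathlib

open Finset

/-- The number of `k`-subsets containing a given set `A`. -/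
lemma card_supersets_le (n k : ℕ) (A : Finset (Fin n)) :
    ((powersetCard k (univ : Finset (Fin n))).filter (fun S => A ⊆ S)).card
      ≤ (n - A.card).choose (k - A.card) := by
  have h : (powersetCard (k - A.card) (Aᶜ)).card = (n - A.card).choose (k - A.card) := by
    rw [card_powersetCard, card_compl, Fintype.card_fin]
  rw [← h]
  apply Finset.card_le_card_of_injOn (fun S => S \ A)
  · intro S hS
    simp only [coe_filter, mem_powersetCard, subset_univ, true_and, Set.mem_setOf_eq] at hS
    simp only [Finset.mem_coe, mem_powersetCard]
    refine ⟨?_, ?_⟩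
    · intro x hx
      simp only [mem_sdiff, mem_compl] at hx ⊢
      exact hx.2
    · rw [card_sdiff_of_subset hS.2, hS.1]
  · intro S hS T hT hST
    simp only [coe_filter, Set.mem_setOf_eq] at hS hT
    simp only at hST
    rw [← sdiff_union_of_subset hS.2, hST, sdiff_union_of_subset hT.2]

lemma choose_three (f n j : ℕ) (hn : n = 3 * f + 1) :
    3 ^ j * f.choose j ≤ n.choose j := by
  have h : 3 ^ j * f.descFactorial j ≤ n.descFactorial j := by
    induction j with
    | zero => simp
    | succ j ih =>
      rw [Nat.descFactorial_succ, Nat.descFactorial_succ]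
      calc 3 ^ (j + 1) * ((f - j) * f.descFactorial j)
          = (3 * (f - j)) * (3 ^ j * f.descFactorial j) := by ring
        _ ≤ _ := Nat.mul_le_mul (by omega) ih
  rw [Nat.descFactorial_eq_factorial_mul_choose, Nat.descFactorial_eq_factorial_mul_choose] at h
  have := Nat.factorial_pos j
  refine Nat.le_of_mul_le_mul_left ?_ this
  calc _ = 3 ^ j * (j.factorial * f.choose j) := by ring
    _ ≤ _ := h

lemma term_bound (f n k j : ℕ) (hn : n = 3 * f + 1) (hk : k ≤ n) (hj : j ≤ k) :
    (f.choose j : ℝ) * ((n - j).choose (k - j) : ℝ)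
      ≤ (n.choose k : ℝ) * ((1 / 3 : ℝ) ^ j * (k.choose j : ℝ)) := by
  have h1 : (n.choose k : ℝ) * (k.choose j : ℝ) = (n.choose j : ℝ) * ((n - j).choose (k - j) : ℝ) := by
    exact_mod_cast Nat.choose_mul hj
  have h2 : (3 : ℝ) ^ j * (f.choose j : ℝ) ≤ (n.choose j : ℝ) := by
    exact_mod_cast choose_three f n j hn
  have h3 : (f.choose j : ℝ) ≤ (1 / 3 : ℝ) ^ j * (n.choose j : ℝ) := by
    rw [one_div, inv_pow, ← div_eq_inv_mul, le_div_iff₀ (by positivity)]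
    linarith
  calc _ ≤ ((1 / 3 : ℝ) ^ j * (n.choose j : ℝ)) * ((n - j).choose (k - j) : ℝ) := by gcongr
    _ = (1 / 3 : ℝ) ^ j * ((n.choose k : ℝ) * (k.choose j : ℝ)) := by rw [h1]; ring
    _ = _ := by ring

/-- Moment generating function bound for the hypergeometric distribution. -/
lemma mgf_bound (f n k : ℕ) (hn : n = 3 * f + 1) (B : Finset (Fin n)) (hB : B.card = f)
    (hk : k ≤ n) :
    ∑ S ∈ powersetCard k (univ : Finset (Fin n)), (2 : ℝ) ^ (S ∩ B).card
      ≤ (n.choose k : ℝ) * (4 / 3 : ℝ) ^ k := by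
  have e1 : ∀ S : Finset (Fin n), (2 : ℝ) ^ (S ∩ B).card
      = ∑ A ∈ B.powerset, if A ⊆ S then (1 : ℝ) else 0 := by
    intro S
    rw [← sum_filter, sum_const, nsmul_eq_mul, mul_one]
    have : B.powerset.filter (fun A => A ⊆ S) = (S ∩ B).powerset := by
      ext A
      simp only [mem_filter, mem_powerset, subset_inter_iff]
      tauto
    rw [this, card_powerset]
    push_cast
    rfl
  simp_rw [e1]
  rw [sum_comm]
  have e2 : ∀ A ∈ B.powerset,
      (∑ S ∈ powersetCard k (univ : Finset (Fin n)), if A ⊆ S then (1 : ℝ) else 0)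
        ≤ if A.card ≤ k then ((n - A.card).choose (k - A.card) : ℝ) else 0 := by
    intro A _
    rw [← sum_filter, sum_const, nsmul_eq_mul, mul_one]
    split_ifs with h
    · exact_mod_cast card_supersets_le n k A
    · have : (powersetCard k (univ : Finset (Fin n))).filter (fun S => A ⊆ S) = ∅ := by
        apply filter_eq_empty_iff.2
        intro S hS hAS
        have := card_le_card hAS
        rw [(mem_powersetCard.1 hS).2] at this
        exact h this
      rw [this]; simp
  refine (sum_le_sum e2).trans ?_
  rw [sum_powerset_apply_card
    (fun j => if j ≤ k then ((n - j).choose (k - j) : ℝ) else 0), hB]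
  have e3 : ∀ j ∈ range (f + 1),
      f.choose j • (if j ≤ k then ((n - j).choose (k - j) : ℝ) else 0)
       ≤ (n.choose k : ℝ) * ((1 / 3 : ℝ) ^ j * (k.choose j : ℝ)) := by
    intro j _
    split_ifs with h
    · rw [nsmul_eq_mul]
      exact term_bound f n k j hn hk h
    · rw [smul_zero]; positivity
  refine (sum_le_sum e3).trans ?_
  rw [← mul_sum]
  gcongr
  have e4 : (4 / 3 : ℝ) ^ k = ∑ j ∈ range (k + 1), (1 / 3 : ℝ) ^ j * (k.choose j : ℝ) := by
    have := add_pow (1 / 3 : ℝ) 1 k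
    simp only [one_pow, mul_one] at this
    rw [← this]; norm_num
  rw [e4]
  calc _ ≤ ∑ j ∈ range (max f k + 1), (1 / 3 : ℝ) ^ j * (k.choose j : ℝ) := by
        apply sum_le_sum_of_subset_of_nonneg
        · apply range_subset_range.2; omega
        · intros; positivity
    _ = _ := by
        symm
        apply sum_subset
        · apply range_subset_range.2; omega
        · intro j _ hj
          rw [Nat.choose_eq_zero_of_lt (by simpa using hj)]
          simp

lemma bad_bound (f n k : ℕ) (hn : n = 3 * f + 1) (B : Finset (Fin n)) (hB : B.card = f)
    (hk : k ≤ n) :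
    (((powersetCard k (univ : Finset (Fin n))).filter
      (fun S => ¬ 2 * (S ∩ B).card ≤ k)).card : ℝ)
      ≤ (n.choose k : ℝ) * Real.exp (-(k : ℝ) / 18) := by
  set bad := (powersetCard k (univ : Finset (Fin n))).filter
      (fun S => ¬ 2 * (S ∩ B).card ≤ k) with hbad
  have hs : (0 : ℝ) < √2 := by positivity
  have hs2 : √2 ^ 2 = (2 : ℝ) := Real.sq_sqrt (by norm_num)
  have hs1 : (1 : ℝ) ≤ √2 := by nlinarith
  have h1 : (bad.card : ℝ) * √2 ^ k ≤ (n.choose k : ℝ) * (4 / 3 : ℝ) ^ k := by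
    refine le_trans ?_ (mgf_bound f n k hn B hB hk)
    calc (bad.card : ℝ) * √2 ^ k = ∑ S ∈ bad, √2 ^ k := by simp
      _ ≤ ∑ S ∈ bad, (2 : ℝ) ^ (S ∩ B).card := by
          apply sum_le_sum
          intro S hS
          have hS2 := (mem_filter.1 hS).2
          calc √2 ^ k ≤ √2 ^ (2 * (S ∩ B).card) := pow_le_pow_right₀ hs1 (by omega)
            _ = _ := by rw [pow_mul, hs2]
      _ ≤ _ := by
          apply sum_le_sum_of_subset_of_nonneg (filter_subset _ _)
          intros; positivity
  have h2 : (4 / 3 : ℝ) ≤ Real.exp (-1 / 18) * √2 := by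
    have h : (8 / 9 : ℝ) ≤ Real.exp (-1 / 18) ^ 2 := by
      rw [← Real.exp_nat_mul]
      have := Real.add_one_le_exp (((2 : ℕ) : ℝ) * (-1 / 18))
      refine le_trans ?_ this
      norm_num
    apply (pow_le_pow_iff_left₀ (by norm_num) (by positivity) two_ne_zero).1;
    rw [mul_pow, hs2]
    linarith
  have h3 : Real.exp (-(k : ℝ) / 18) = Real.exp (-1 / 18) ^ k := by
    rw [← Real.exp_nat_mul]; congr 1; ring
  rw [h3]
  have h4 : (4 / 3 : ℝ) ^ k ≤ Real.exp (-1 / 18) ^ k * √2 ^ k := by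
    rw [← mul_pow]; gcongr
  refine le_of_mul_le_mul_right ?_ (pow_pos hs k)
  calc _ ≤ _ := h1
    _ ≤ (n.choose k : ℝ) * (Real.exp (-1 / 18) ^ k * √2 ^ k) := by gcongr
    _ = _ := by ring

/-- First half of Theorem 3 (success-prob): sample `φ` mutually independent
committees, each uniform over the `nc`-element subsets of the `n = 3f+1`
nodes (modelled by the uniform distribution on tuples of `φ` such subsets),
with `nc ≥ 18·log(2φ/ε)`.  Then with probability at least `1 − ε/2` every
committee contains at most `nc/2` Byzantine nodes (members of the fixed set
`B` with `|B| = f`). -/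
theorem stmt_10 (f : ℕ) (hf : 1 ≤ f) (n : ℕ) (hn : n = 3 * f + 1)
    (B : Finset (Fin n)) (hB : B.card = f)
    (ε : ℝ) (hε : 0 < ε) (φ : ℕ) (hφ : 1 ≤ φ)
    (nc : ℕ) (hnc1 : 1 ≤ nc) (hnc2 : nc ≤ n)
    (hnc3 : 18 * Real.log (2 * (φ : ℝ) / ε) ≤ (nc : ℝ)) :
    1 - ε / 2 ≤
      (((Fintype.piFinset
            (fun _ : Fin φ => Finset.powersetCard nc (Finset.univ : Finset (Fin n)))).filter
          (fun T => ∀ i : Fin φ, 2 * ((T i ∩ B).card) ≤ nc)).card : ℝ) /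
        ((Fintype.piFinset
            (fun _ : Fin φ => Finset.powersetCard nc (Finset.univ : Finset (Fin n)))).card : ℝ) := by
  set P := powersetCard nc (univ : Finset (Fin n)) with hP
  have hPc : P.card = n.choose nc := by rw [hP, card_powersetCard, card_univ, Fintype.card_fin]
  set G := P.filter (fun S => 2 * (S ∩ B).card ≤ nc) with hG
  have hset : (Fintype.piFinset (fun _ : Fin φ => P)).filter
      (fun T => ∀ i : Fin φ, 2 * ((T i ∩ B).card) ≤ nc) = Fintype.piFinset (fun _ : Fin φ => G) := by
    ext T
    simp only [mem_filter, Fintype.mem_piFinset, hG]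
    exact ⟨fun h i => ⟨h.1 i, h.2 i⟩, fun h => ⟨fun i => (h i).1, fun i => (h i).2⟩⟩
  rw [hset, Fintype.card_piFinset, Fintype.card_piFinset]
  simp only [prod_const, card_univ, Fintype.card_fin]
  push_cast
  rw [← div_pow]
  have hPpos : (0 : ℝ) < P.card := by
    rw [hPc]; exact_mod_cast Nat.choose_pos hnc2
  have hsum : (G.card : ℝ) +
      ((P.filter (fun S => ¬ 2 * (S ∩ B).card ≤ nc)).card : ℝ) = P.card := by
    exact_mod_cast card_filter_add_card_filter_not (s := P) (fun S => 2 * (S ∩ B).card ≤ nc)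
  have hbad := bad_bound f n nc hn B hB hnc2
  rw [← hP, ← hPc] at hbad
  have hφ0 : (0 : ℝ) < φ := by exact_mod_cast hφ
  have hexp : Real.exp (-(nc : ℝ) / 18) ≤ ε / (2 * φ) := by
    calc Real.exp (-(nc : ℝ) / 18) ≤ Real.exp (-Real.log (2 * (φ : ℝ) / ε)) := by
          apply Real.exp_le_exp.2; linarith
      _ = ε / (2 * φ) := by
          rw [Real.exp_neg, Real.exp_log (by positivity), inv_div]
  have hr : 1 - ε / (2 * φ) ≤ (G.card : ℝ) / P.card := by
    rw [le_div_iff₀ hPpos]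
    nlinarith [mul_le_mul_of_nonneg_left hexp hPpos.le]
  have hr0 : (0 : ℝ) ≤ (G.card : ℝ) / P.card := by positivity
  have hb := one_add_mul_le_pow (a := (G.card : ℝ) / P.card - 1) (by linarith) φ
  rw [add_sub_cancel] at hb
  refine le_trans ?_ hb
  have h5 : (φ : ℝ) * (-(ε / (2 * φ))) ≤ φ * ((G.card : ℝ) / P.card - 1) := by
    apply mul_le_mul_of_nonneg_left _ hφ0.le
    linarith
  have h6 : (φ : ℝ) * (-(ε / (2 * φ))) = -(ε / 2) := by field_simp
  linarith
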